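/- Let n ≥ 1, ν > 0, and let f : ℍⁿ → ℝ be continuous, nonnegative, attaining its maximum at the origin, with α := lim_{|ζ|_H→∞} |ζ|_H^ν f(ζ) existing and positive, β := α^{2/ν} f(0)^{−2/ν}, and such that for every ξ ∈ ℍⁿ there exists λ(ξ) > 0 with (λ(ξ)/d_H(ξ,ζ))^ν · f(Φ_{ξ,λ(ξ)}^β(ζ)) = f(ζ) for all ζ ≠ ξ. Suppose for some δ > 0 the maps z : (−δ,δ)∖{0} → ℂⁿ and t : (−δ,δ)∖{0} → ℝ are continuous and satisfy either (A1) z(h) is bounded and |t(h)| is bounded above and below by positive constant multiples of |h|^{−1} as h → 0, or (A2) t(h) is bounded and |z(h)| is bounded above and below by positive constant multiples of |h|^{−1} as h → 0. Then lim_{h→0} (1/h) · { |(z(h),t(h))|_H^ν · f(z(h),t(h)) − α } = 0. -/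

import Mathlib

open Complex Filter Topology MeasureTheory

noncomputable section

/-- The Heisenberg group ℍⁿ as ℂⁿ × ℝ. -/
abbrev Heis (n : ℕ) := (Fin n → ℂ) × ℝ

namespace Heis

variable {n : ℕ}

/-- Hermitian inner product ⟨z,z'⟩ = Σ_j z_j conj(z'_j). -/
def hermInner (z w : Fin n → ℂ) : ℂ := ∑ j, z j * (starRingEnd ℂ) (w j)

/-- Squared Euclidean norm |z|² = Σ_j |z_j|². -/
def nsq (z : Fin n → ℂ) : ℝ := ∑ j, Complex.normSq (z j)

/-- Group law (z,t)·(z',t') = (z+z', t+t'+2 Im⟨z,z'⟩). -/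
def hmul (a b : Heis n) : Heis n :=
  (a.1 + b.1, a.2 + b.2 + 2 * (hermInner a.1 b.1).im)

/-- Group inverse: ζ⁻¹ = −ζ. -/
def hinv (a : Heis n) : Heis n := (-a.1, -a.2)

/-- Korányi norm |(z,t)|_H = (|z|⁴ + t²)^{1/4}. -/
def korNorm (a : Heis n) : ℝ := ((nsq a.1) ^ 2 + a.2 ^ 2) ^ ((1 : ℝ)/4)

/-- Korányi distance d_H(ξ,ζ) = |ζ⁻¹·ξ|_H. -/
def dH (a b : Heis n) : ℝ := korNorm (hmul (hinv b) a)

/-- Open Korányi ball B_λ(ξ). -/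
def ball (ξ : Heis n) (lam : ℝ) : Set (Heis n) := {ζ | dH ξ ζ < lam}

/-- Left translation τ_ξ. -/
def tau (ξ ζ : Heis n) : Heis n := hmul ξ ζ

/-- Dilation δ_λ(z,t) = (λz, λ²t). -/
def dil (lam : ℝ) (a : Heis n) : Heis n := (fun j => (lam : ℂ) * a.1 j, lam ^ 2 * a.2)

/-- Rotation ρ_M(z,t) = (Mz,t). -/
def rot (M : Matrix (Fin n) (Fin n) ℂ) (a : Heis n) : Heis n := (M.mulVec a.1, a.2)

/-- Inversion ι(z,t) = (conj z, −t). -/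
def iota (a : Heis n) : Heis n := (fun j => (starRingEnd ℂ) (a.1 j), -a.2)

/-- w = t + i|z|². -/
def wC (a : Heis n) : ℂ := (a.2 : ℂ) + Complex.I * ((nsq a.1 : ℝ) : ℂ)

/-- CR inversion 𝒥(z,t) = (z/w, −t/|w|²). -/
def crInv (a : Heis n) : Heis n :=
  (fun j => a.1 j / wC a, -a.2 / Complex.normSq (wC a))

/-- Angles θ_k for the rotation matrix M_{ξ,β}. -/
def theta (ξ : Heis n) (β : ℝ) (k : Fin n) : ℝ :=
  if ξ.1 k ≠ 0 then 2 * (ξ.1 k).arg + (wC ξ + Complex.I * (β : ℂ)).arg else 0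

/-- The unitary diagonal matrix M_{ξ,β} = diag(e^{iθ₁},…,e^{iθₙ}). -/
def Mmat (ξ : Heis n) (β : ℝ) : Matrix (Fin n) (Fin n) ℂ :=
  Matrix.diagonal fun k => Complex.exp (Complex.I * ((theta ξ β k : ℝ) : ℂ))

/-- Generalized CR inversion Φ_{ξ,λ}^β = τ_ξ ∘ ρ_{M_{ξ,β}} ∘ δ_{λ²} ∘ 𝒥 ∘ ι ∘ τ_ξ⁻¹. -/
def Phi (ξ : Heis n) (lam β : ℝ) (ζ : Heis n) : Heis n :=
  tau ξ (rot (Mmat ξ β) (dil (lam ^ 2) (crInv (iota (hmul (hinv ξ) ζ)))))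

/-- Direction of the vector field X_j at p. -/
def XVec (j : Fin n) (p : Heis n) : Heis n := (Pi.single j (1 : ℂ), 2 * (p.1 j).im)

/-- Direction of the vector field Y_j at p. -/
def YVec (j : Fin n) (p : Heis n) : Heis n := (Pi.single j Complex.I, -2 * (p.1 j).re)

/-- The vector field X_j acting on functions. -/
def Xop (j : Fin n) (u : Heis n → ℝ) (p : Heis n) : ℝ := fderiv ℝ u p (XVec j p)

/-- The vector field Y_j acting on functions. -/
def Yop (j : Fin n) (u : Heis n → ℝ) (p : Heis n) : ℝ := fderiv ℝ u p (YVec j p)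

/-- Sub-Laplacian Δ_H = Σ_j (X_j² + Y_j²). -/
def subLap (u : Heis n → ℝ) (p : Heis n) : ℝ :=
  ∑ j, (Xop j (Xop j u) p + Yop j (Yop j u) p)

/-- Squared length of the horizontal gradient |∇_H u|² = Σ_j ((X_j u)² + (Y_j u)²). -/
def gradHSq (u : Heis n → ℝ) (p : Heis n) : ℝ :=
  ∑ j, ((Xop j u p) ^ 2 + (Yop j u p) ^ 2)

/-- Generalized Kelvin transform u_{ξ,λ}^β(η) = (λ/d_H(η,ξ))^{Q−2} u(Φ_{ξ,λ}^β(η)), Q−2 = 2n. -/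
def kelvin (u : Heis n → ℝ) (ξ : Heis n) (lam β : ℝ) (η : Heis n) : ℝ :=
  (lam / dH η ξ) ^ (2 * n) * u (Phi ξ lam β η)

/-- The filter |ζ|_H → ∞ on ℍⁿ. -/
def atInftyH (n : ℕ) : Filter (Heis n) := Filter.comap korNorm Filter.atTop

end Heis

open Heis

namespace HeisAux

variable {n : ℕ}

/-- The inversion K = J ∘ ι. -/
def K (p : Heis n) : Heis n := crInv (iota p)

/-- The complex number -t - i|z|². -/
def Wb (p : Heis n) : ℂ := -(p.2 : ℂ) - Complex.I * ((nsq p.1 : ℝ) : ℂ)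

def D (ξ p : Heis n) : ℂ :=
  1 + wC ξ * Wb p - 2 * Complex.I * ∑ j, ξ.1 j * p.1 j

def Q (ξ p : Heis n) : Heis n :=
  (fun j => (p.1 j - (starRingEnd ℂ) (ξ.1 j) * Wb p) / D ξ p, -(Wb p / D ξ p).re)

def P (ξ : Heis n) (lam β : ℝ) (p : Heis n) : Heis n :=
  tau ξ (rot (Mmat ξ β) (dil (lam ^ 2) (Q ξ p)))

def N (p : Heis n) : ℝ := nsq p.1 + p.2 ^ 2

lemma nsq_nonneg (z : Fin n → ℂ) : 0 ≤ nsq z :=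
  Finset.sum_nonneg fun _ _ => Complex.normSq_nonneg _

lemma normSq_le_nsq (z : Fin n → ℂ) (j : Fin n) : Complex.normSq (z j) ≤ nsq z :=
  Finset.single_le_sum (f := fun j => Complex.normSq (z j))
    (fun _ _ => Complex.normSq_nonneg _) (Finset.mem_univ j)

lemma nsq_conj (z : Fin n → ℂ) : nsq (fun j => (starRingEnd ℂ) (z j)) = nsq z := by
  simp [nsq]

lemma wC_re (p : Heis n) : (wC p).re = p.2 := by simp [wC]
lemma wC_im (p : Heis n) : (wC p).im = nsq p.1 := by simp [wC]

lemma normSq_wC (p : Heis n) : Complex.normSq (wC p) = nsq p.1 ^ 2 + p.2 ^ 2 := by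
  rw [Complex.normSq_apply, wC_re, wC_im]; ring

lemma wC_iota_re (p : Heis n) : (wC (iota p)).re = -p.2 := by simp [wC_re, iota]
lemma wC_iota_im (p : Heis n) : (wC (iota p)).im = nsq p.1 := by
  rw [wC_im]; exact nsq_conj _

lemma normSq_wC_iota (p : Heis n) :
    Complex.normSq (wC (iota p)) = nsq p.1 ^ 2 + p.2 ^ 2 := by
  rw [Complex.normSq_apply, wC_iota_re, wC_iota_im]; ring

lemma Wb_eq (p : Heis n) : Wb p = (starRingEnd ℂ) (wC (iota p)) := by
  apply Complex.ext
  · rw [Complex.conj_re, wC_iota_re]; simp [Wb]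
  · rw [Complex.conj_im, wC_iota_im]; simp [Wb]

lemma korNorm_eq (p : Heis n) : korNorm p = (Complex.normSq (wC (iota p))) ^ ((1 : ℝ) / 4) := by
  rw [normSq_wC_iota]; rfl

lemma nsq_eq_zero {z : Fin n → ℂ} (h : nsq z = 0) : z = 0 := by
  funext j
  have := normSq_le_nsq z j
  have h2 := Complex.normSq_nonneg (z j)
  exact Complex.normSq_eq_zero.1 (by linarith)

lemma wC_iota_ne {p : Heis n} (hp : p ≠ 0) : wC (iota p) ≠ 0 := by
  intro h
  apply hp
  have h1 := wC_iota_re p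
  have h2 := wC_iota_im p
  rw [h] at h1 h2
  refine Prod.ext (nsq_eq_zero ?_) ?_
  · simpa using h2.symm
  · simpa using h1

lemma K_fst (p : Heis n) (j : Fin n) :
    (K p).1 j = (starRingEnd ℂ) (p.1 j) / wC (iota p) := rfl

lemma K_snd (p : Heis n) : (K p).2 = p.2 / Complex.normSq (wC (iota p)) := by
  simp [K, crInv, iota]

lemma nsq_K (p : Heis n) : nsq (K p).1 = nsq p.1 / Complex.normSq (wC (iota p)) := by
  simp [nsq, K_fst, Finset.sum_div]

lemma Wb_K (p : Heis n) : Wb (K p) = (wC (iota p))⁻¹ := by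
  apply Complex.ext
  · rw [Complex.inv_re, wC_iota_re]; simp [Wb, K_snd, neg_div]
  · rw [Complex.inv_im, wC_iota_im]; simp [Wb, nsq_K, neg_div]

lemma wC_iota_K (p : Heis n) : wC (iota (K p)) = (starRingEnd ℂ) (wC (iota p))⁻¹ := by
  rw [← Wb_K, Wb_eq, Complex.conj_conj]

lemma K_K {p : Heis n} (hp : p ≠ 0) : K (K p) = p := by
  have h := wC_iota_ne hp
  have hcj : (starRingEnd ℂ) (wC (iota p)) ≠ 0 := by simpa using h
  have hsq : Complex.normSq (wC (iota p)) ≠ 0 := by simpa using h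
  refine Prod.ext (funext fun j => ?_) ?_
  · rw [K_fst, K_fst, wC_iota_K, map_div₀, map_inv₀, Complex.conj_conj]
    field_simp
  · rw [K_snd, K_snd, wC_iota_K, Complex.normSq_conj, map_inv₀]
    field_simp

lemma K_zero : K (0 : Heis n) = 0 := by
  refine Prod.ext (funext fun j => ?_) ?_
  · simp [K_fst]
  · simp [K_snd]

lemma K_ne {p : Heis n} (hp : p ≠ 0) : K p ≠ 0 := by
  intro h
  apply hp
  rw [← K_K hp, h, K_zero]

lemma korNorm_K (p : Heis n) : korNorm (K p) = (korNorm p)⁻¹ := by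
  rw [korNorm_eq, korNorm_eq, wC_iota_K, Complex.normSq_conj, map_inv₀,
    Real.inv_rpow (Complex.normSq_nonneg _)]

lemma korNorm_pos {p : Heis n} (hp : p ≠ 0) : 0 < korNorm p := by
  rw [korNorm_eq]
  exact Real.rpow_pos_of_pos (Complex.normSq_pos.2 (wC_iota_ne hp)) _

/-- key identity for w after translation -/
lemma wC_translate {ζ : Heis n} (hζ : ζ ≠ 0) (ξ : Heis n) :
    wC (iota (hmul (hinv ξ) ζ)) = wC (iota ζ) * D ξ (K ζ) := by
  have h := wC_iota_ne hζ
  have e : wC (iota ζ) * D ξ (K ζ) =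
      wC (iota ζ) + wC ξ - 2 * Complex.I * ∑ j, ξ.1 j * (starRingEnd ℂ) (ζ.1 j) := by
    have : ∑ j, ξ.1 j * (K ζ).1 j
        = (∑ j, ξ.1 j * (starRingEnd ℂ) (ζ.1 j)) / wC (iota ζ) := by
      rw [Finset.sum_div]
      exact Finset.sum_congr rfl fun j _ => by rw [K_fst]; ring
    rw [D, Wb_K, this]
    field_simp
  rw [e]
  apply Complex.ext
  · rw [wC_iota_re]
    rw [Complex.sub_re, Complex.add_re, wC_iota_re, wC_re]
    simp [hmul, hinv, hermInner]
    ring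
  · rw [wC_iota_im]
    rw [Complex.sub_im, Complex.add_im, wC_iota_im, wC_im]
    simp only [hmul, hinv, nsq]
    simp only [Complex.mul_im, Complex.mul_re, Complex.re_sum, Complex.I_re, Complex.I_im,
      Complex.normSq_apply, Pi.add_apply, Pi.neg_apply, Complex.add_re, Complex.add_im,
      Complex.neg_re, Complex.neg_im, Complex.conj_re, Complex.conj_im, Complex.re_ofNat,
      Complex.im_ofNat]
    simp only [mul_zero, mul_one, zero_mul, sub_zero, add_zero, zero_add]
    rw [Finset.mul_sum, ← Finset.sum_add_distrib, ← Finset.sum_sub_distrib]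
    exact Finset.sum_congr rfl fun j _ => by ring

lemma dH_eq (ξ ζ : Heis n) : dH ξ ζ = korNorm (hmul (hinv ξ) ζ) := by
  have h1 : nsq (-ζ.1 + ξ.1) = nsq (-ξ.1 + ζ.1) := by
    unfold nsq
    refine Finset.sum_congr rfl fun j _ => ?_
    rw [← Complex.normSq_neg]; congr 1; simp
  have h2 : (hermInner (-ζ.1) ξ.1).im = - (hermInner (-ξ.1) ζ.1).im := by
    simp only [hermInner, Complex.im_sum, ← Finset.sum_neg_distrib]
    refine Finset.sum_congr rfl fun j _ => ?_
    simp; ring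
  simp only [dH, korNorm, hmul, hinv]
  rw [h1, h2]
  congr 2
  ring

lemma K_translate {ζ : Heis n} (hζ : ζ ≠ 0) (ξ : Heis n) (hD : D ξ (K ζ) ≠ 0) :
    K (hmul (hinv ξ) ζ) = Q ξ (K ζ) := by
  have h := wC_iota_ne hζ
  have key := wC_translate hζ ξ
  refine Prod.ext (funext fun j => ?_) ?_
  · rw [K_fst, key]
    simp only [Q, Wb_K, K_fst, hmul, hinv, Pi.add_apply, Pi.neg_apply, map_add, map_neg]
    field_simp
    ring
  · simp only [Q, Wb_K]
    rw [← neg_neg (K (hmul (hinv ξ) ζ)).2]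
    congr 1
    have : (wC (iota ζ))⁻¹ / D ξ (K ζ) = (wC (iota (hmul (hinv ξ) ζ)))⁻¹ := by
      rw [key]; field_simp
    rw [this, Complex.inv_re, wC_iota_re, K_snd, neg_div]

lemma main_id (ν : ℝ) (f : Heis n → ℝ) (β lam : ℝ) (hlam : 0 < lam) (ξ : Heis n)
    (hsym : ∀ ζ : Heis n, ζ ≠ ξ → (lam / dH ξ ζ) ^ ν * f (Phi ξ lam β ζ) = f ζ)
    {ζ : Heis n} (hζ : ζ ≠ 0) (hD : D ξ (K ζ) ≠ 0) :
    korNorm ζ ^ ν * f ζ =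
      (lam * (Complex.normSq (D ξ (K ζ))) ^ (-(1 / 4) : ℝ)) ^ ν * f (P ξ lam β (K ζ)) := by
  have key := wC_translate hζ ξ
  have hne : ζ ≠ ξ := by
    rintro rfl
    have h0 : hmul (hinv ζ) ζ = 0 := by
      refine Prod.ext (by simp [hmul, hinv]) ?_
      have : (hermInner (-ζ.1) ζ.1).im = 0 := by
        simp only [hermInner, Complex.im_sum]
        refine Finset.sum_eq_zero fun j _ => ?_
        simp; ring
      simp [hmul, hinv, this]
    rw [h0] at key
    have : wC (iota (0 : Heis n)) = 0 := by simp [wC, iota, nsq]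
    rw [this] at key
    exact (mul_ne_zero (wC_iota_ne hζ) hD) key.symm
  have hPhi : Phi ξ lam β ζ = P ξ lam β (K ζ) := by
    rw [P, ← K_translate hζ ξ hD]; rfl
  have hk := korNorm_pos hζ
  have hDp : 0 < Complex.normSq (D ξ (K ζ)) := Complex.normSq_pos.2 hD
  have hdH : dH ξ ζ = korNorm ζ * (Complex.normSq (D ξ (K ζ))) ^ ((1 : ℝ) / 4) := by
    rw [dH_eq, korNorm_eq, key, map_mul, korNorm_eq,
      Real.mul_rpow (Complex.normSq_nonneg _) (Complex.normSq_nonneg _)]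
  have hpos : 0 < (Complex.normSq (D ξ (K ζ))) ^ ((1 : ℝ) / 4) := Real.rpow_pos_of_pos hDp _
  rw [← hsym ζ hne, hPhi, ← mul_assoc, ← Real.mul_rpow hk.le, hdH, Real.rpow_neg hDp.le]
  · congr 2
    field_simp
  · rw [hdH]; positivity

lemma D_zero (ξ : Heis n) : D ξ 0 = 1 := by simp [D, Wb, nsq]

lemma P_zero (ξ : Heis n) (lam β : ℝ) : P ξ lam β 0 = ξ := by
  have hQ : Q ξ 0 = 0 := by
    refine Prod.ext (funext fun j => ?_) ?_ <;> simp [Q, Wb, nsq]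
  rw [P, hQ]
  refine Prod.ext (funext fun j => ?_) ?_ <;>
    simp [tau, rot, dil, hmul, hermInner, Matrix.mulVec, dotProduct]

lemma diff_nsq : Differentiable ℝ (nsq : (Fin n → ℂ) → ℝ) := by
  have : (nsq : (Fin n → ℂ) → ℝ) = fun z => ∑ j, ‖z j‖ ^ 2 := by
    funext z; simp [nsq, Complex.normSq_eq_norm_sq]
  rw [this]
  refine Differentiable.fun_sum fun j _ => ?_
  exact (differentiable_apply j).norm_sq ℝ

lemma diff_N : Differentiable ℝ (N : Heis n → ℝ) := by
  unfold N
  exact (diff_nsq.comp differentiable_fst).add (differentiable_snd.pow 2)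

lemma diff_ofReal {E : Type*} [NormedAddCommGroup E] [NormedSpace ℝ E] {g : E → ℝ}
    (hg : Differentiable ℝ g) : Differentiable ℝ (fun x => (g x : ℂ)) :=
  Complex.ofRealCLM.differentiable.comp hg

lemma diff_Wb : Differentiable ℝ (Wb : Heis n → ℂ) := by
  unfold Wb
  exact (diff_ofReal differentiable_snd).neg.sub
    ((diff_ofReal (diff_nsq.comp differentiable_fst)).const_mul _)

lemma diff_coord (j : Fin n) : Differentiable ℝ (fun p : Heis n => p.1 j) :=
  (differentiable_pi.1 differentiable_fst) j

lemma diff_D (ξ : Heis n) : Differentiable ℝ (D ξ) := by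
  unfold D
  refine ((differentiable_const _).add (diff_Wb.const_mul _)).sub
    (Differentiable.const_mul (Differentiable.fun_sum fun j _ => ?_) _)
  exact (diff_coord j).const_mul _

lemma diff_div {g h : Heis n → ℂ} {p : Heis n} (hg : DifferentiableAt ℝ g p)
    (hh : DifferentiableAt ℝ h p) (h0 : h p ≠ 0) :
    DifferentiableAt ℝ (fun x => g x / h x) p := by
  simp only [div_eq_mul_inv]
  exact hg.mul (hh.inv h0)

lemma diff_Q (ξ : Heis n) : DifferentiableAt ℝ (Q ξ) 0 := by
  have hD : D ξ 0 ≠ 0 := by simp [D_zero]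
  unfold Q
  refine DifferentiableAt.prodMk (differentiableAt_pi.2 fun j => ?_) ?_
  · exact diff_div ((diff_coord j).sub (diff_Wb.const_mul _)).differentiableAt
      (diff_D ξ).differentiableAt hD
  · exact (Complex.reCLM.differentiableAt.comp (0 : Heis n)
      (diff_div diff_Wb.differentiableAt (diff_D ξ).differentiableAt hD)).neg

lemma diff_A (ξ : Heis n) (M : Matrix (Fin n) (Fin n) ℂ) (c : ℝ) :
    Differentiable ℝ (fun q : Heis n => tau ξ (rot M (dil c q))) := by
  have h1 : ∀ i, Differentiable ℝ (fun q : Heis n => (M.mulVec (fun j => (c : ℂ) * q.1 j)) i) := by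
    intro i
    simp only [Matrix.mulVec, dotProduct]
    exact Differentiable.fun_sum fun j _ => ((diff_coord j).const_mul _).const_mul _
  simp only [tau, rot, dil, hmul, hermInner]
  refine Differentiable.prodMk ?_ ?_
  · exact (differentiable_const _).add (differentiable_pi.2 h1)
  · refine Differentiable.add ((differentiable_const _).add
      (differentiable_snd.const_mul _)) (Differentiable.const_mul ?_ _)
    refine Complex.imCLM.differentiable.comp (Differentiable.fun_sum fun j _ => ?_)
    exact Differentiable.const_mul (Complex.conjCLE.differentiable.comp (h1 j)) _

lemma diff_P (ξ : Heis n) (lam β : ℝ) : DifferentiableAt ℝ (P ξ lam β) 0 :=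
  (diff_A ξ (Mmat ξ β) (lam ^ 2)).differentiableAt.comp (0 : Heis n) (diff_Q ξ)

def G (ν lam : ℝ) (ξ p : Heis n) : ℝ :=
  (lam * (Complex.normSq (D ξ p)) ^ (-(1 / 4) : ℝ)) ^ ν

lemma G_zero (ν lam : ℝ) (ξ : Heis n) : G ν lam ξ 0 = lam ^ ν := by
  simp [G, D_zero]

lemma diff_G (ν lam : ℝ) (hlam : 0 < lam) (ξ : Heis n) : DifferentiableAt ℝ (G ν lam ξ) 0 := by
  have h1 : DifferentiableAt ℝ (fun p => Complex.normSq (D ξ p)) 0 := by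
    simp only [Complex.normSq_eq_norm_sq]
    exact (diff_D ξ).differentiableAt.norm_sq ℝ
  unfold G
  refine DifferentiableAt.rpow_const (DifferentiableAt.const_mul
    (DifferentiableAt.rpow_const h1 (Or.inl ?_)) _) (Or.inl ?_)
  · simp [D_zero]
  · simp [D_zero, hlam.ne']

lemma tendsto_K : Tendsto (K : Heis n → Heis n) (𝓝[≠] 0) (atInftyH n) := by
  unfold atInftyH
  rw [tendsto_comap_iff]
  have h0 : Tendsto (korNorm : Heis n → ℝ) (𝓝[≠] 0) (𝓝[>] 0) := by
    refine tendsto_nhdsWithin_iff.2 ⟨?_, ?_⟩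
    · have hc : Continuous (korNorm : Heis n → ℝ) := by
        unfold korNorm
        refine Continuous.rpow_const ?_ (fun _ => Or.inr (by norm_num))
        exact ((diff_nsq.continuous.comp continuous_fst).pow 2).add (continuous_snd.pow 2)
      have := hc.tendsto (0 : Heis n)
      have hz : korNorm (0 : Heis n) = 0 := by simp [korNorm, nsq]
      rw [hz] at this
      exact this.mono_left nhdsWithin_le_nhds
    · filter_upwards [self_mem_nhdsWithin] with p hp using korNorm_pos hp
  have := tendsto_inv_nhdsGT_zero.comp h0
  refine this.congr fun p => ?_
  simp [korNorm_K]

lemma D_ev (ξ : Heis n) : ∀ᶠ p in 𝓝 (0 : Heis n), D ξ p ≠ 0 :=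
  (diff_D ξ).continuous.continuousAt.eventually_ne (by simp [D_zero])

/-- The scaling constant is determined by the behaviour at infinity. -/
lemma lam_eq {ν : ℝ} {f : Heis n → ℝ} (hcont : Continuous f) {α : ℝ}
    (hlim : Tendsto (fun ζ => korNorm ζ ^ ν * f ζ) (atInftyH n) (nhds α))
    {β lam : ℝ} (hlam : 0 < lam) {ξ : Heis n}
    (hsym : ∀ ζ : Heis n, ζ ≠ ξ → (lam / dH ξ ζ) ^ ν * f (Phi ξ lam β ζ) = f ζ) :
    lam ^ ν * f ξ = α := by
  have h1 := hlim.comp (tendsto_K (n := n))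
  have h2 : Tendsto (fun p => G ν lam ξ p * f (P ξ lam β p)) (𝓝[≠] 0) (𝓝 (lam ^ ν * f ξ)) := by
    have hc : ContinuousAt (fun p => G ν lam ξ p * f (P ξ lam β p)) 0 :=
      (diff_G ν lam hlam ξ).continuousAt.mul
        (hcont.continuousAt.comp (diff_P ξ lam β).continuousAt)
    have := hc.tendsto
    simp only [G_zero, P_zero] at this
    exact this.mono_left nhdsWithin_le_nhds
  have : (𝓝[≠] (0 : Heis n)).NeBot := Module.punctured_nhds_neBot ℝ (Heis n) 0
  refine tendsto_nhds_unique (h2.congr' ?_) h1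
  filter_upwards [self_mem_nhdsWithin, nhdsWithin_le_nhds (D_ev ξ)] with p hp hD
  have := main_id ν f β lam hlam ξ hsym (K_ne hp) (by rwa [K_K hp])
  rw [K_K hp] at this
  exact this.symm

lemma exists_touch (f : Heis n → ℝ) (hcont : Continuous f) (hnonneg : ∀ p, 0 ≤ f p) :
    ∃ ξ : Heis n, ∀ q, f ξ + (f 0) * N ξ ≤ f q + (f 0) * N q := by
  refine Continuous.exists_forall_le' (f := fun q => f q + f 0 * N q)
    (hcont.add (continuous_const.mul diff_N.continuous)) 0 ?_
  filter_upwards [(isCompact_closedBall (0 : Heis n) 1).compl_mem_cocompact] with q hq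
  have hN0 : N (0 : Heis n) = 0 := by simp [N, nsq]
  have hN : 1 ≤ N q := by
    by_contra hlt
    push Not at hlt
    apply hq
    rw [mem_closedBall_zero_iff, Prod.norm_def, max_le_iff, pi_norm_le_iff_of_nonneg zero_le_one]
    unfold N at hlt
    refine ⟨fun j => ?_, ?_⟩
    · have := normSq_le_nsq q.1 j
      rw [Complex.normSq_eq_norm_sq] at this
      nlinarith [sq_nonneg q.2, norm_nonneg (q.1 j)]
    · have := nsq_nonneg q.1
      rw [Real.norm_eq_abs]
      exact abs_le_one_iff_mul_self_le_one.2 (by nlinarith)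
  have := mul_le_mul_of_nonneg_left hN (hnonneg 0)
  rw [hN0]
  linarith [hnonneg q]

lemma norm_K_le {p : Heis n} {B : ℝ} (hB : 0 ≤ B)
    (h1 : ∀ j, ‖p.1 j‖ ≤ B * ‖wC (iota p)‖) (h2 : 1 ≤ B * ‖wC (iota p)‖)
    (hp : p ≠ 0) : ‖K p‖ ≤ B := by
  have hw : 0 < ‖wC (iota p)‖ := norm_pos_iff.2 (wC_iota_ne hp)
  rw [Prod.norm_def, max_le_iff, pi_norm_le_iff_of_nonneg hB]
  refine ⟨fun j => ?_, ?_⟩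
  · rw [K_fst, norm_div, div_le_iff₀ hw]
    simpa using h1 j
  · rw [K_snd, Complex.normSq_eq_norm_sq, norm_div, norm_pow, norm_norm,
      div_le_iff₀ (by positivity)]
    have h3 : ‖p.2‖ ≤ ‖wC (iota p)‖ := by
      have := Complex.abs_re_le_norm (wC (iota p))
      rwa [wC_iota_re, abs_neg] at this
    nlinarith

end HeisAux

open HeisAux in
/-- asymptotic lemma along curves satisfying (A1) or (A2). -/
theorem asymptotic_lemma (n : ℕ) (hn : 1 ≤ n) (ν : ℝ) (hν : 0 < ν)
    (f : Heis n → ℝ) (hcont : Continuous f) (hnonneg : ∀ p, 0 ≤ f p)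
    (hmax : ∀ p, f p ≤ f 0)
    (α : ℝ) (hα : 0 < α)
    (hlim : Tendsto (fun ζ => korNorm ζ ^ ν * f ζ) (atInftyH n) (nhds α))
    (β : ℝ) (hβ : β = α ^ (2 / ν) * f 0 ^ (-(2 / ν)))
    (hsym : ∀ ξ : Heis n, ∃ lam : ℝ, 0 < lam ∧
      ∀ ζ : Heis n, ζ ≠ ξ → (lam / dH ξ ζ) ^ ν * f (Phi ξ lam β ζ) = f ζ)
    (δ : ℝ) (hδ : 0 < δ)
    (z : ℝ → Fin n → ℂ) (t : ℝ → ℝ)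
    (hzc : ContinuousOn z (Set.Ioo (-δ) δ \ {0}))
    (htc : ContinuousOn t (Set.Ioo (-δ) δ \ {0}))
    (hA : (∃ C c₁ c₂ : ℝ, 0 < c₁ ∧ 0 < c₂ ∧ ∀ s ∈ Set.Ioo (-δ) δ \ ({0} : Set ℝ),
            Real.sqrt (nsq (z s)) ≤ C ∧ c₁ ≤ |t s| * |s| ∧ |t s| * |s| ≤ c₂) ∨
          (∃ C c₁ c₂ : ℝ, 0 < c₁ ∧ 0 < c₂ ∧ ∀ s ∈ Set.Ioo (-δ) δ \ ({0} : Set ℝ),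
            |t s| ≤ C ∧ c₁ ≤ Real.sqrt (nsq (z s)) * |s| ∧
              Real.sqrt (nsq (z s)) * |s| ≤ c₂)) :
    Tendsto (fun s : ℝ => (1 / s) * (korNorm (z s, t s) ^ ν * f (z s, t s) - α))
      (nhdsWithin 0 ({0}ᶜ : Set ℝ)) (nhds 0) := by

  obtain ⟨ξ, hξ⟩ := exists_touch f hcont hnonneg
  obtain ⟨lam, hlam, hs⟩ := hsym ξ
  obtain ⟨l0, hl0, hs0⟩ := hsym 0
  have hup : ∀ ζ : Heis n, ζ ≠ 0 → korNorm ζ ^ ν * f ζ ≤ α := by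
    intro ζ hζ
    have hD : ∀ p, D (0 : Heis n) p = 1 := by intro p; simp [D, wC, nsq]
    have h := main_id ν f β l0 hl0 0 hs0 hζ (by rw [hD]; exact one_ne_zero)
    have h2 := lam_eq hcont hlim hl0 hs0
    rw [h, ← h2, hD]
    simp only [map_one, Real.one_rpow, mul_one]
    exact mul_le_mul_of_nonneg_left (hmax _) (Real.rpow_nonneg hl0.le _)
  have hα2 := lam_eq hcont hlim hlam hs
  set Ψ : Heis n → ℝ := fun p =>
    G ν lam ξ p * (f ξ + f 0 * N ξ - f 0 * N (P ξ lam β p)) with hΨ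
  have hΨ0 : Ψ 0 = α := by
    simp only [hΨ, G_zero, P_zero]
    rw [← hα2]; ring
  have hΨd : DifferentiableAt ℝ Ψ 0 :=
    (diff_G ν lam hlam ξ).mul ((differentiableAt_const _).sub
      ((diff_N.differentiableAt.comp (0 : Heis n) (diff_P ξ lam β)).const_mul _))
  have hlow : ∀ ζ : Heis n, ζ ≠ 0 → D ξ (K ζ) ≠ 0 → Ψ (K ζ) ≤ korNorm ζ ^ ν * f ζ := by
    intro ζ hζ hD
    rw [main_id ν f β lam hlam ξ hs hζ hD]
    refine mul_le_mul_of_nonneg_left ?_ ?_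
    · linarith [hξ (P ξ lam β (K ζ))]
    · exact Real.rpow_nonneg (mul_nonneg hlam.le
        (Real.rpow_nonneg (Complex.normSq_nonneg _) _)) _
  have hmaxΨ : IsLocalMax Ψ 0 := by
    filter_upwards [D_ev ξ] with p hD
    rw [hΨ0]
    by_cases hp : p = 0
    · rw [hp, hΨ0]
    · have h1 := hlow (K p) (K_ne hp) (by rwa [K_K hp])
      rw [K_K hp] at h1
      exact h1.trans (hup _ (K_ne hp))
  have hfd : HasFDerivAt Ψ (0 : Heis n →L[ℝ] ℝ) 0 := by
    have := hΨd.hasFDerivAt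
    rwa [hmaxΨ.fderiv_eq_zero] at this
  have hO : ∃ B : ℝ, ∀ s ∈ Set.Ioo (-δ) δ \ ({0} : Set ℝ),
      (z s, t s) ≠ (0 : Heis n) ∧ ‖K (z s, t s)‖ ≤ B * |s| := by
    rcases hA with ⟨C, c₁, c₂, hc₁, hc₂, h⟩ | ⟨C, c₁, c₂, hc₁, hc₂, h⟩
    · refine ⟨(|C| + 1) / c₁, fun s hs => ?_⟩
      obtain ⟨h1, h2, h3⟩ := h s hs
      have hne : (z s, t s) ≠ (0 : Heis n) := by
        intro h0
        have : t s = 0 := congrArg Prod.snd h0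
        rw [this] at h2
        simp at h2
        linarith
      have hw : |t s| ≤ ‖wC (iota (z s, t s))‖ := by
        have := Complex.abs_re_le_norm (wC (iota (z s, t s)))
        rwa [wC_iota_re, abs_neg] at this
      have hbig : |C| + 1 ≤ (|C| + 1) / c₁ * |s| * ‖wC (iota (z s, t s))‖ := by
        have e : c₁ ≤ ‖wC (iota (z s, t s))‖ * |s| :=
          h2.trans (mul_le_mul_of_nonneg_right hw (abs_nonneg s))
        rw [div_mul_eq_mul_div, div_mul_eq_mul_div, le_div_iff₀ hc₁]
        calc (|C| + 1) * c₁ ≤ (|C| + 1) * (‖wC (iota (z s, t s))‖ * |s|) :=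
              mul_le_mul_of_nonneg_left e (by positivity)
          _ = _ := by ring
      refine ⟨hne, norm_K_le (by positivity) (fun j => ?_) ?_ hne⟩
      · refine le_trans ?_ hbig
        have h4 : ‖z s j‖ ≤ Real.sqrt (nsq (z s)) := by
          apply Real.le_sqrt_of_sq_le
          rw [← Complex.normSq_eq_norm_sq]
          exact normSq_le_nsq _ _
        have := le_abs_self C
        simp only
        linarith
      · exact le_trans (by linarith [abs_nonneg C]) hbig
    · refine ⟨1 / c₁ + δ / c₁ ^ 2, fun s hs => ?_⟩
      obtain ⟨-, h2, -⟩ := h s hs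
      have hs0 : 0 < |s| := abs_pos.2 hs.2
      have hsδ : |s| ≤ δ := (abs_lt.2 hs.1).le
      have hne : (z s, t s) ≠ (0 : Heis n) := by
        intro h0
        have : z s = 0 := congrArg Prod.fst h0
        rw [this] at h2
        simp [nsq] at h2
        linarith
      have hw : nsq (z s) ≤ ‖wC (iota (z s, t s))‖ := by
        have := Complex.abs_im_le_norm (wC (iota (z s, t s)))
        rw [wC_iota_im] at this
        exact (le_abs_self _).trans this
      set r := Real.sqrt (nsq (z s)) with hr
      have hr2 : r ^ 2 = nsq (z s) := Real.sq_sqrt (nsq_nonneg _)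
      have hr0 : 0 ≤ r := Real.sqrt_nonneg _
      have e1 : r ≤ 1 / c₁ * |s| * r ^ 2 := by
        rw [div_mul_eq_mul_div, div_mul_eq_mul_div, le_div_iff₀ hc₁]
        nlinarith
      have e2 : 1 ≤ δ / c₁ ^ 2 * |s| * r ^ 2 := by
        rw [div_mul_eq_mul_div, div_mul_eq_mul_div, le_div_iff₀ (by positivity), one_mul]
        calc c₁ ^ 2 ≤ (r * |s|) ^ 2 := by gcongr
          _ = |s| * |s| * r ^ 2 := by ring
          _ ≤ δ * |s| * r ^ 2 := by gcongr
      have p1 : 0 ≤ 1 / c₁ * |s| := by positivity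
      have p2 : 0 ≤ δ / c₁ ^ 2 * |s| := by positivity
      have hw2 : (1 / c₁ + δ / c₁ ^ 2) * |s| * r ^ 2 ≤
          (1 / c₁ + δ / c₁ ^ 2) * |s| * ‖wC (iota (z s, t s))‖ := by
        rw [hr2]
        exact mul_le_mul_of_nonneg_left hw (by positivity)
      have q1 := mul_nonneg p1 (sq_nonneg r)
      have q2 := mul_nonneg p2 (sq_nonneg r)
      refine ⟨hne, norm_K_le (by positivity) (fun j => ?_) ?_ hne⟩
      · have h4 : ‖z s j‖ ≤ r := by
          apply Real.le_sqrt_of_sq_le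
          rw [← Complex.normSq_eq_norm_sq]
          exact normSq_le_nsq _ _
        simp only
        linarith
      · linarith
  obtain ⟨B, hB⟩ := hO
  have hev : ∀ᶠ s in 𝓝[≠] (0 : ℝ), s ∈ Set.Ioo (-δ) δ \ ({0} : Set ℝ) := by
    filter_upwards [self_mem_nhdsWithin,
      nhdsWithin_le_nhds (Ioo_mem_nhds (neg_lt_zero.2 hδ) hδ)] with s h1 h2
    exact ⟨h2, h1⟩
  have hbig : (fun s => K (z s, t s)) =O[𝓝[≠] (0 : ℝ)] (fun s : ℝ => s) := by
    refine Asymptotics.IsBigO.of_bound B ?_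
    filter_upwards [hev] with s hs
    exact (hB s hs).2
  have hK0 : Tendsto (fun s => K (z s, t s)) (𝓝[≠] (0 : ℝ)) (𝓝 0) :=
    hbig.trans_tendsto (tendsto_id.mono_left nhdsWithin_le_nhds)
  have hlit : (fun p => Ψ p - α) =o[𝓝 0] (fun p : Heis n => p) := by
    have := hasFDerivAt_iff_isLittleO.1 hfd
    simpa [hΨ0] using this
  have hlit2 := (hlit.comp_tendsto hK0).trans_isBigO hbig
  have hT := hlit2.tendsto_div_nhds_zero
  refine squeeze_zero_norm' ?_ (by simpa using hT.norm)
  filter_upwards [hev, hK0.eventually (D_ev ξ)] with s hs hD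
  have h1 := hup _ (hB s hs).1
  have h2 := hlow _ (hB s hs).1 hD
  rw [one_div, inv_mul_eq_div, norm_div, ← Real.norm_eq_abs, ← Real.norm_eq_abs]
  refine div_le_div_of_nonneg_right ?_ (norm_nonneg _)
  rw [Real.norm_eq_abs, Real.norm_eq_abs, abs_of_nonpos (by linarith), abs_of_nonpos (by linarith)]
  linarith
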